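/- Let m>0, let k denote the continuous extension to the closed upper half-plane of the branch of √(z²−m²) with Im k(z)>0 for Im z>0, let ζ∈C_c^∞(ℝ), and fix nonnegative integers j and κ̃. For x∈ℝ set N_x(ω) = (ik(ω)·sgn x)^j · e^{ik(ω)|x|} · (−iω)^{κ̃} · ζ(ω) and Ň_x(t) = (1/2π)∫_ℝ N_x(ω)e^{−iωt}dω. Then Ň_x ∈ L¹(ℝ;ℂ) for every x, and for every R>0 there is a constant C (depending only on j, κ̃, R, m, ζ) such that sup_{|x|≤R} ‖Ň_x‖_{L¹(ℝ)} ≤ C. -/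

import Mathlib

open MeasureTheory Filter
open scoped ENNReal Topology

noncomputable section

open scoped Classical in
/-- The continuous extension to the closed upper half-plane of the branch
`k(z) = √(z²−m²)` with `Im k(z) > 0` for `Im z > 0`: in the open upper half-plane
`k(z) = i(m²−z²)^{1/2}` (principal power), and on the real axis
`k(ω) = √(ω²−m²)` for `ω ≥ m`, `k(ω) = −√(ω²−m²)` for `ω ≤ −m`,
and `k(ω) = i√(m²−ω²)` for `|ω| ≤ m`. -/
def kCl (m : ℝ) (w : ℂ) : ℂ :=
  if 0 < w.im then Complex.I * (((m:ℂ)^2 - w^2) ^ ((1:ℂ)/2))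
  else if m ≤ w.re then ((Real.sqrt (w.re^2 - m^2) : ℝ) : ℂ)
  else if w.re ≤ -m then -((Real.sqrt (w.re^2 - m^2) : ℝ) : ℂ)
  else Complex.I * ((Real.sqrt (m^2 - w.re^2) : ℝ) : ℂ)


theorem norm_integral_mul_le_of_antiperiodic {f e : ℝ → ℂ} {h : ℝ} (hf : Integrable f)
    (he : Continuous e) (he1 : ∀ ω, ‖e ω‖ ≤ 1) (hanti : Function.Antiperiodic e h)
    {W : ℝ → ℝ} (hW : Integrable W)
    (hfW : ∀ᵐ ω, ‖f (ω + h) + f (ω - h) - 2 * f ω‖ ≤ W ω) :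
    4 * ‖∫ ω, f ω * e ω‖ ≤ ∫ ω, W ω := by
  have hint : ∀ F : ℝ → ℂ, Integrable F → Integrable (fun ω => F ω * e ω) := fun F hF =>
    hF.mul_bdd (c := 1) he.aestronglyMeasurable (.of_forall he1)
  have h₁ : ∫ ω, f (ω + h) * e ω = -∫ ω, f ω * e ω := by
    rw [← integral_add_right_eq_self (fun ω => f ω * e ω) h, ← integral_neg]
    refine integral_congr_ae (.of_forall fun ω => ?_)
    simp [hanti ω]
  have h₂ : ∫ ω, f (ω - h) * e ω = -∫ ω, f ω * e ω := by
    rw [← integral_sub_right_eq_self (fun ω => f ω * e ω) h, ← integral_neg]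
    refine integral_congr_ae (.of_forall fun ω => ?_)
    simp [hanti.sub_eq ω]
  have hfp := hf.comp_add_right h
  have hfm := hf.comp_sub_right h
  have key : ∫ ω, (f (ω + h) + f (ω - h) - 2 * f ω) * e ω = -4 * ∫ ω, f ω * e ω := by
    have : (fun ω => (f (ω + h) + f (ω - h) - 2 * f ω) * e ω)
        = fun ω => (f (ω + h) * e ω + f (ω - h) * e ω) - 2 * (f ω * e ω) := by
      ext ω; ring
    have hsub := integral_sub ((hint _ hfp).add (hint _ hfm)) ((hint _ hf).const_mul 2)
    simp only [Pi.add_apply] at hsub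
    rw [this, hsub, integral_add (hint _ hfp) (hint _ hfm), integral_const_mul, h₁, h₂]
    ring
  calc 4 * ‖∫ ω, f ω * e ω‖ = ‖-4 * ∫ ω, f ω * e ω‖ := by simp
    _ = ‖∫ ω, (f (ω + h) + f (ω - h) - 2 * f ω) * e ω‖ := by rw [key]
    _ ≤ ∫ ω, W ω := by
      refine norm_integral_le_of_norm_le hW ?_
      filter_upwards [hfW] with ω hω
      rw [norm_mul]
      exact (mul_le_of_le_one_right (norm_nonneg _) (he1 ω)).trans hω

theorem antiperiodic_exp_neg_I_mul {t : ℝ} (ht : t ≠ 0) :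
    Function.Antiperiodic (fun ω : ℝ => Complex.exp (-Complex.I * (ω : ℂ) * (t : ℂ)))
      (Real.pi / |t|) := by
  intro ω
  have htc : (t : ℂ) ≠ 0 := by exact_mod_cast ht
  rcases abs_choice t with h | h
  · have : -Complex.I * ((ω + Real.pi / |t| : ℝ) : ℂ) * (t : ℂ)
        = -Complex.I * (ω : ℂ) * (t : ℂ) - Real.pi * Complex.I := by
      rw [h]; push_cast; field_simp; ring
    simp only [this, Complex.exp_sub, Complex.exp_pi_mul_I, div_neg, div_one]
  · have : -Complex.I * ((ω + Real.pi / |t| : ℝ) : ℂ) * (t : ℂ)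
        = -Complex.I * (ω : ℂ) * (t : ℂ) + Real.pi * Complex.I := by
      rw [h]; push_cast; field_simp; ring
    simp only [this, Complex.exp_add, Complex.exp_pi_mul_I]
    simp

theorem norm_second_difference_le {𝕜 : Type*} [RCLike 𝕜] {g : 𝕜 → ℂ} [NormedSpace 𝕜 ℂ]
    {s : Set 𝕜} {M : ℝ} (hs : Convex ℝ s) (hg : Differentiable 𝕜 g)
    (hg' : Differentiable 𝕜 (deriv g)) (hM : ∀ z ∈ s, ‖deriv (deriv g) z‖ ≤ M)
    {a b c : 𝕜} (ha : a ∈ s) (hb : b ∈ s) (hc : c ∈ s) (hMc : ‖deriv g c‖ ≤ M) :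
    ‖g a + g b - 2 * g c‖ ≤ M * (‖a + b - 2 * c‖ + ‖a - c‖ ^ 2 + ‖b - c‖ ^ 2) := by
  have taylor : ∀ y ∈ s, ‖g y - g c - (y - c) • deriv g c‖ ≤ M * ‖y - c‖ ^ 2 := by
    intro y hy
    have hder : ∀ z, HasDerivAt (fun z => g z - (z - c) • deriv g c)
        (deriv g z - (1 : 𝕜) • deriv g c) z := fun z =>
      (hg z).hasDerivAt.sub (((hasDerivAt_id z).sub_const c).smul_const (deriv g c))
    have hMnn : 0 ≤ M := (norm_nonneg _).trans hMc
    have := (hs.inter (convex_closedBall c ‖y - c‖)).norm_image_sub_le_of_norm_hasDerivWithin_le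
      (f := fun z => g z - (z - c) • deriv g c) (C := M * ‖y - c‖)
      (fun z _ => (hder z).hasDerivWithinAt) (fun z hz => ?_)
      (x := c) (y := y) ⟨hc, by simp⟩ ⟨hy, by simp [dist_eq_norm]⟩
    · rw [sq, ← mul_assoc]
      refine le_trans (le_of_eq ?_) this
      congr 1
      simp only [sub_self, zero_smul]
      ring
    · rw [one_smul]
      refine (hs.norm_image_sub_le_of_norm_deriv_le (fun z _ => hg' z) hM hc hz.1).trans ?_
      gcongr
      simpa [dist_eq_norm] using hz.2
  have hsplit : g a + g b - 2 * g c = (a + b - 2 * c) • deriv g c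
      + (g a - g c - (a - c) • deriv g c) + (g b - g c - (b - c) • deriv g c) := by
    have : (a + b - 2 * c) = (a - c) + (b - c) := by ring
    rw [this, add_smul]
    ring
  rw [hsplit]
  refine (norm_add₃_le).trans ?_
  rw [norm_smul, mul_add, mul_add]
  rw [mul_comm M ‖a + b - 2 * c‖]
  gcongr
  · exact taylor a ha
  · exact taylor b hb

theorem norm_deriv_le_on_closedBall {g : ℂ → ℂ} (hg : Differentiable ℂ g) {r M : ℝ}
    (hM : ∀ z : ℂ, ‖z‖ ≤ r + 1 → ‖g z‖ ≤ M) {z : ℂ} (hz : ‖z‖ ≤ r) : ‖deriv g z‖ ≤ M := by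
  have := Complex.norm_deriv_le_of_forall_mem_sphere_norm_le (c := z) (R := 1) (C := M) one_pos
    hg.diffContOnCl (fun w hw => hM w ?_)
  · simpa using this
  · rw [mem_sphere_iff_norm] at hw
    calc ‖w‖ = ‖z + (w - z)‖ := by ring_nf
      _ ≤ ‖z‖ + ‖w - z‖ := norm_add_le _ _
      _ ≤ r + 1 := by rw [hw]; gcongr

theorem locallyIntegrable_abs_sub_rpow (c : ℝ) :
    LocallyIntegrable (fun x : ℝ => |x - c| ^ (-(3 / 4) : ℝ)) := by
  have h0 : LocallyIntegrable (fun x : ℝ => |x| ^ (-(3 / 4) : ℝ)) := by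
    refine locallyIntegrable_of_norm_le_rpow (C := 1) (α := 3 / 4) (by simp) (by norm_num)
      (.of_forall fun x => ?_) (Measurable.aestronglyMeasurable (by fun_prop))
    rw [one_mul, Real.norm_of_nonneg (by positivity), Real.norm_eq_abs]
  rw [locallyIntegrable_iff] at h0 ⊢
  intro K hK
  have h1 := h0 _ (hK.image (f := fun x => x - c) (by fun_prop))
  exact ((measurePreserving_sub_right volume c).integrableOn_image
    (MeasurableEquiv.subRight c).measurableEmbedding).1 h1

theorem integrableOn_abs_sq_sub_sq_rpow {m : ℝ} (hm : 0 < m) (a b : ℝ) :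
    IntegrableOn (fun x : ℝ => |x ^ 2 - m ^ 2| ^ (-(3 / 4) : ℝ)) (Set.Icc a b) := by
  have hp := (locallyIntegrable_abs_sub_rpow m).integrableOn_isCompact
    (isCompact_Icc (a := a) (b := b))
  have hn := (locallyIntegrable_abs_sub_rpow (-m)).integrableOn_isCompact
    (isCompact_Icc (a := a) (b := b))
  refine Integrable.mono' ((hp.add hn).const_mul (m ^ (-(3 / 4) : ℝ)))
    (Measurable.aestronglyMeasurable (by fun_prop)) (.of_forall fun x => ?_)
  rw [Real.norm_of_nonneg (by positivity)]
  have hfac : |x ^ 2 - m ^ 2| = |x - m| * |x - -m| := by rw [← abs_mul]; ring_nf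
  rw [hfac, Real.mul_rpow (abs_nonneg _) (abs_nonneg _)]
  simp only [Pi.add_apply]
  have h1 : 0 ≤ |x - m| ^ (-(3 / 4) : ℝ) := by positivity
  have h2 : 0 ≤ |x - -m| ^ (-(3 / 4) : ℝ) := by positivity
  have h3 : 0 ≤ m ^ (-(3 / 4) : ℝ) := by positivity
  rcases le_total 0 x with hx | hx
  · have : |x - -m| ^ (-(3 / 4) : ℝ) ≤ m ^ (-(3 / 4) : ℝ) :=
      Real.rpow_le_rpow_of_nonpos hm (by rw [abs_of_nonneg] <;> linarith) (by norm_num)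
    nlinarith
  · have : |x - m| ^ (-(3 / 4) : ℝ) ≤ m ^ (-(3 / 4) : ℝ) :=
      Real.rpow_le_rpow_of_nonpos hm (by rw [abs_of_nonpos] <;> linarith) (by norm_num)
    nlinarith

theorem kCl_ofReal {m : ℝ} (hm : 0 < m) (ω : ℝ) :
    kCl m ω = ((Real.sign ω * Real.sqrt (ω ^ 2 - m ^ 2) : ℝ) : ℂ)
      + (Real.sqrt (m ^ 2 - ω ^ 2) : ℝ) * Complex.I := by
  simp only [kCl, Complex.ofReal_im, lt_irrefl, if_false, Complex.ofReal_re]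
  split_ifs with h1 h2
  · rw [Real.sign_of_pos (by linarith), Real.sqrt_eq_zero_of_nonpos (x := m ^ 2 - ω ^ 2)
      (by nlinarith)]
    simp
  · rw [Real.sign_of_neg (by linarith), Real.sqrt_eq_zero_of_nonpos (x := m ^ 2 - ω ^ 2)
      (by nlinarith)]
    simp
  · rw [Real.sqrt_eq_zero_of_nonpos (x := ω ^ 2 - m ^ 2) (by nlinarith)]
    simp [mul_comm]

theorem kCl_ofReal_sq {m : ℝ} (hm : 0 < m) (ω : ℝ) :
    kCl m ω ^ 2 = (ω : ℂ) ^ 2 - (m : ℂ) ^ 2 := by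
  simp only [kCl, Complex.ofReal_im, lt_irrefl, if_false, Complex.ofReal_re]
  split_ifs with h1 h2
  · rw [← Complex.ofReal_pow, Real.sq_sqrt (by nlinarith)]
    push_cast; rfl
  · rw [neg_sq, ← Complex.ofReal_pow, Real.sq_sqrt (by nlinarith)]
    push_cast; rfl
  · rw [mul_pow, ← Complex.ofReal_pow, Real.sq_sqrt (by nlinarith), Complex.I_sq]
    push_cast; ring

theorem norm_kCl_ofReal_sq {m : ℝ} (hm : 0 < m) (ω : ℝ) :
    ‖kCl m ω‖ ^ 2 = |ω ^ 2 - m ^ 2| := by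
  rw [← norm_pow, kCl_ofReal_sq hm, ← Real.norm_eq_abs, ← Complex.norm_real]
  push_cast; rfl

theorem kCl_im_nonneg {m : ℝ} (hm : 0 < m) (ω : ℝ) : 0 ≤ (kCl m ω).im := by
  simp [kCl_ofReal hm, Real.sqrt_nonneg]

theorem kCl_re_mul_re_nonneg {m : ℝ} (hm : 0 < m) {a b : ℝ} (hab : |a - b| ≤ 2 * m) :
    0 ≤ (kCl m a).re * (kCl m b).re := by
  wlog h : a ≤ b generalizing a b
  · rw [mul_comm]
    exact this (by rwa [abs_sub_comm]) (le_of_not_ge h)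
  have hab' := abs_le.1 hab
  have hre : ∀ ω : ℝ, (kCl m ω).re = Real.sign ω * Real.sqrt (ω ^ 2 - m ^ 2) := fun ω => by
    simp [kCl_ofReal hm]
  rw [hre, hre]
  have hsa := Real.sqrt_nonneg (a ^ 2 - m ^ 2)
  have hsb := Real.sqrt_nonneg (b ^ 2 - m ^ 2)
  have hsab := mul_nonneg hsa hsb
  rcases lt_or_ge 0 a with ha | ha
  · rw [Real.sign_of_pos ha, Real.sign_of_pos (ha.trans_le h)]
    simpa using hsab
  rcases lt_or_ge b 0 with hb | hb
  · rw [Real.sign_of_neg hb, Real.sign_of_neg (h.trans_lt hb)]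
    simpa using hsab
  · rcases le_total (-m) a with hma | hma
    · rw [Real.sqrt_eq_zero_of_nonpos (x := a ^ 2 - m ^ 2) (by nlinarith)]
      simp
    · rw [Real.sqrt_eq_zero_of_nonpos (x := b ^ 2 - m ^ 2) (by nlinarith)]
      simp

theorem norm_le_norm_add_of_re_mul_add_im_mul_nonneg {z w : ℂ}
    (h : 0 ≤ z.re * w.re + z.im * w.im) :
    ‖z‖ ≤ ‖z + w‖ ∧ ‖w‖ ≤ ‖z + w‖ ∧ ‖z - w‖ ≤ ‖z + w‖ := by
  simp only [Complex.norm_def, Complex.normSq_apply, Complex.add_re, Complex.add_im,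
    Complex.sub_re, Complex.sub_im]
  refine ⟨Real.sqrt_le_sqrt ?_, Real.sqrt_le_sqrt ?_, Real.sqrt_le_sqrt ?_⟩ <;>
    nlinarith [mul_self_nonneg z.re, mul_self_nonneg z.im, mul_self_nonneg w.re,
      mul_self_nonneg w.im]

theorem norm_kCl_le_norm_add {m : ℝ} (hm : 0 < m) {a b : ℝ} (hab : |a - b| ≤ 2 * m) :
    ‖kCl m a‖ ≤ ‖kCl m a + kCl m b‖ ∧ ‖kCl m b‖ ≤ ‖kCl m a + kCl m b‖ ∧
      ‖kCl m a - kCl m b‖ ≤ ‖kCl m a + kCl m b‖ :=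
  norm_le_norm_add_of_re_mul_add_im_mul_nonneg <|
    add_nonneg (kCl_re_mul_re_nonneg hm hab) (mul_nonneg (kCl_im_nonneg hm a) (kCl_im_nonneg hm b))

theorem norm_kCl_sub_mul_norm_add {m : ℝ} (hm : 0 < m) (a b : ℝ) :
    ‖kCl m a - kCl m b‖ * ‖kCl m a + kCl m b‖ = |a ^ 2 - b ^ 2| := by
  have h : (kCl m a - kCl m b) * (kCl m a + kCl m b) = ((a ^ 2 - b ^ 2 : ℝ) : ℂ) := by
    push_cast
    linear_combination kCl_ofReal_sq hm a - kCl_ofReal_sq hm b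
  rw [← norm_mul, h, Complex.norm_real, Real.norm_eq_abs]

theorem norm_kCl_sub_sq_le {m : ℝ} (hm : 0 < m) {a b : ℝ} (hab : |a - b| ≤ 2 * m) :
    ‖kCl m a - kCl m b‖ ^ 2 ≤ |a ^ 2 - b ^ 2| := by
  rw [← norm_kCl_sub_mul_norm_add hm, sq]
  gcongr
  exact (norm_kCl_le_norm_add hm hab).2.2

theorem norm_kCl_le {m : ℝ} (hm : 0 < m) {L ω : ℝ} (hmL : m ≤ L) (hω : |ω| ≤ L) :
    ‖kCl m ω‖ ≤ L := by
  have hL : 0 ≤ L := hm.le.trans hmL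
  refine abs_le_of_sq_le_sq' (b := L) ?_ hL |>.2
  rw [norm_kCl_ofReal_sq hm, abs_le]
  have := sq_le_sq' (abs_le.1 hω).1 (abs_le.1 hω).2
  constructor <;> nlinarith [sq_nonneg ω, sq_nonneg m]

theorem measurable_kCl_ofReal {m : ℝ} (hm : 0 < m) : Measurable fun ω : ℝ => kCl m ω := by
  have hsign : Measurable Real.sign := by
    unfold Real.sign
    exact Measurable.ite measurableSet_Iio measurable_const
      (Measurable.ite measurableSet_Ioi measurable_const measurable_const)
  simp_rw [kCl_ofReal hm]
  fun_prop

theorem norm_kCl_sub_le {m : ℝ} (hm : 0 < m) {L u ω a : ℝ} (hL : 1 ≤ L)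
    (hω : |ω| ≤ L) (ha : |a| ≤ L) (hu : 0 ≤ u) (hum : u ^ 2 ≤ 2 * m) (haω : |a - ω| = u ^ 2) :
    ‖kCl m a - kCl m ω‖ ≤ 2 * L * u ∧ ‖kCl m a - kCl m ω‖ * ‖kCl m ω‖ ≤ 2 * L * u ^ 2 := by
  have hle : |a ^ 2 - ω ^ 2| ≤ 2 * L * u ^ 2 := by
    have : a ^ 2 - ω ^ 2 = (a - ω) * (a + ω) := by ring
    rw [this, abs_mul, haω, mul_comm]
    gcongr
    linarith [abs_add_le a ω]
  have hd : |a - ω| ≤ 2 * m := by rw [haω]; exact hum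
  constructor
  · refine abs_le_of_sq_le_sq' (b := 2 * L * u) ?_ (by positivity) |>.2
    refine (norm_kCl_sub_sq_le hm hd).trans (hle.trans ?_)
    have : L * u ^ 2 ≤ L ^ 2 * u ^ 2 := by gcongr; exact le_self_pow₀ hL two_ne_zero
    nlinarith [mul_nonneg (sq_nonneg L) (sq_nonneg u)]
  · calc ‖kCl m a - kCl m ω‖ * ‖kCl m ω‖
        ≤ ‖kCl m a - kCl m ω‖ * ‖kCl m a + kCl m ω‖ := by
          gcongr
          exact (norm_kCl_le_norm_add hm hd).2.1
      _ ≤ _ := by rw [norm_kCl_sub_mul_norm_add hm]; exact hle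

theorem norm_kCl_second_difference_mul_le {m : ℝ} (hm : 0 < m) {L h ω : ℝ}
    (hmL : m ≤ L) (hL : 1 ≤ L) (hh : 0 ≤ h) (hhm : h ≤ 2 * m) (hω : |ω| + h ≤ L) :
    ‖kCl m ↑(ω + h) + kCl m ↑(ω - h) - 2 * kCl m ω‖ * ‖kCl m ω‖ ^ 3 ≤ 12 * L ^ 2 * h ^ 2 := by
  have hp : |ω + h| ≤ L := by
    have := abs_add_le ω h; rw [abs_of_nonneg hh] at this; linarith
  have hn : |ω - h| ≤ L := by
    have := abs_sub ω h; rw [abs_of_nonneg hh] at this; linarith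
  have hω' : |ω| ≤ L := by linarith
  have hdp : |ω + h - ω| ≤ 2 * m := by rwa [add_sub_cancel_left, abs_of_nonneg hh]
  have hdn : |ω - h - ω| ≤ 2 * m := by rwa [sub_sub_cancel_left, abs_neg, abs_of_nonneg hh]
  have hu : Real.sqrt h ^ 2 = h := Real.sq_sqrt hh
  have hDp := (norm_kCl_sub_le hm hL hω' hp (Real.sqrt_nonneg h) (by rwa [hu])
    (by rw [hu, add_sub_cancel_left, abs_of_nonneg hh])).2
  have hDn := (norm_kCl_sub_le hm hL hω' hn (Real.sqrt_nonneg h) (by rwa [hu])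
    (by rw [hu, sub_sub_cancel_left, abs_neg, abs_of_nonneg hh])).2
  rw [hu] at hDp hDn
  have hqp := (norm_kCl_le_norm_add hm hdp).2.1
  have hqn := (norm_kCl_le_norm_add hm hdn).2.1
  have hbn : ‖kCl m ↑(ω - h) + kCl m ω‖ ≤ 2 * L := by
    refine (norm_add_le _ _).trans ?_
    linarith [norm_kCl_le hm hmL hn, norm_kCl_le hm hmL hω']
  have hq := norm_kCl_le hm hmL hω'
  have hsp := kCl_ofReal_sq hm (ω + h)
  have hsn := kCl_ofReal_sq hm (ω - h)
  have hs := kCl_ofReal_sq hm ω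
  push_cast at hsp hsn
  have hid : (kCl m ↑(ω + h) + kCl m ↑(ω - h) - 2 * kCl m ω)
        * ((kCl m ↑(ω + h) + kCl m ω) * (kCl m ↑(ω - h) + kCl m ω))
      = ((h * (2 * ω - h) : ℝ) : ℂ) * ((kCl m ↑(ω - h) - kCl m ω) - (kCl m ↑(ω + h) - kCl m ω))
        + ((2 * h ^ 2 : ℝ) : ℂ) * (kCl m ↑(ω - h) + kCl m ω) := by
    push_cast at *
    generalize kCl m (↑ω + ↑h) = x at *
    generalize kCl m (↑ω - ↑h) = y at *
    generalize kCl m ↑ω = z at *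
    linear_combination (y + z) * (hsp - hs) + (x + z) * (hsn - hs)
  have hnorm := congrArg norm hid
  rw [norm_mul, norm_mul] at hnorm
  have hcoef : ‖((h * (2 * ω - h) : ℝ) : ℂ)‖ ≤ 2 * L * h := by
    rw [Complex.norm_real, norm_mul, Real.norm_of_nonneg hh, Real.norm_eq_abs, mul_comm]
    gcongr
    have := abs_add_le ω (ω - h)
    rw [show ω + (ω - h) = 2 * ω - h by ring] at this
    linarith
  set A := kCl m ↑(ω + h) - kCl m ω
  set B := kCl m ↑(ω - h) - kCl m ω
  set P := ‖kCl m ↑(ω + h) + kCl m ω‖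
  set Q := ‖kCl m ↑(ω - h) + kCl m ω‖ with hQ
  set q := ‖kCl m ω‖
  set E := ‖kCl m ↑(ω + h) + kCl m ↑(ω - h) - 2 * kCl m ω‖
  have hq0 : 0 ≤ q := norm_nonneg _
  have hE0 : 0 ≤ E := norm_nonneg _
  calc E * q ^ 3 = E * (q * q) * q := by ring
    _ ≤ E * (P * Q) * q := by gcongr
    _ ≤ (2 * L * h * (‖B‖ + ‖A‖) + 2 * h ^ 2 * Q) * q := by
      rw [hnorm]
      gcongr
      refine (norm_add_le _ _).trans ?_
      rw [norm_mul, norm_mul]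
      gcongr
      · exact norm_sub_le _ _
      · rw [Complex.norm_real, Real.norm_of_nonneg (by positivity)]
    _ = 2 * L * h * (‖B‖ * q + ‖A‖ * q) + 2 * h ^ 2 * (Q * q) := by ring
    _ ≤ 2 * L * h * (2 * L * h + 2 * L * h) + 2 * h ^ 2 * (2 * L * L) := by
      gcongr
    _ = 12 * L ^ 2 * h ^ 2 := by ring

theorem le_mul_rpow_of_le_sqrt_of_mul_le {T C h q Q : ℝ} (hT : 0 ≤ T) (hh : 0 < h)
    (hq : 0 < q) (hQ : q ^ 2 = Q) (h₁ : T ≤ C * Real.sqrt h) (h₂ : T * q ^ 3 ≤ C * h ^ 2) :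
    T ≤ C * h ^ (5 / 4 : ℝ) * Q ^ (-(3 / 4) : ℝ) := by
  obtain ⟨u, hu, rfl⟩ : ∃ u : ℝ, 0 < u ∧ h = u ^ 4 :=
    ⟨h ^ (1 / 4 : ℝ), by positivity, by rw [← Real.rpow_natCast, ← Real.rpow_mul hh.le]; norm_num⟩
  obtain ⟨v, hv, rfl⟩ : ∃ v : ℝ, 0 < v ∧ q = v ^ 2 :=
    ⟨Real.sqrt q, by positivity, (Real.sq_sqrt hq.le).symm⟩
  have hsqrt : Real.sqrt (u ^ 4) = u ^ 2 := by
    rw [show u ^ 4 = (u ^ 2) ^ 2 by ring, Real.sqrt_sq (by positivity)]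
  have hu5 : (u ^ 4) ^ (5 / 4 : ℝ) = u ^ 5 := by
    rw [← Real.rpow_natCast, ← Real.rpow_mul hu.le, ← Real.rpow_natCast]; norm_num
  have hv3 : Q ^ (-(3 / 4) : ℝ) = (v ^ 3)⁻¹ := by
    rw [← hQ, Real.rpow_neg (by positivity), ← pow_mul, ← Real.rpow_natCast,
      ← Real.rpow_mul hv.le, ← Real.rpow_natCast]
    norm_num
  rw [hsqrt] at h₁
  rw [hu5, hv3, ← div_eq_mul_inv, le_div_iff₀ (by positivity)]
  have hC : 0 ≤ C := nonneg_of_mul_nonneg_left (hT.trans h₁) (by positivity)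
  refine abs_le_of_sq_le_sq' ?_ (by positivity) |>.2
  calc (T * v ^ 3) ^ 2 = T * (T * (v ^ 2) ^ 3) := by ring
    _ ≤ (C * u ^ 2) * (C * (u ^ 4) ^ 2) := by gcongr
    _ = (C * u ^ 5) ^ 2 := by ring

theorem norm_second_difference_comp_kCl_mul_le {m : ℝ} (hm : 0 < m) {L M h ω : ℝ}
    (hmL : m ≤ L) (hL : 1 ≤ L) (hh : 0 < h) (hh1 : h ≤ 1) (hhm : h ≤ 2 * m) (hω : |ω| + h ≤ L)
    {g : ℂ → ℂ} (hg : Differentiable ℂ g) (hgM : ∀ z : ℂ, ‖z‖ ≤ L + 2 → ‖g z‖ ≤ M)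
    {η : ℝ → ℂ} (hη : Differentiable ℝ η) (hη' : Differentiable ℝ (deriv η))
    (hη0 : ∀ x, ‖η x‖ ≤ M) (hη1 : ∀ x, ‖deriv η x‖ ≤ M) (hη2 : ∀ x, ‖deriv (deriv η) x‖ ≤ M)
    (hne : kCl m ω ≠ 0) :
    ‖g (kCl m ↑(ω + h)) * η (ω + h) + g (kCl m ↑(ω - h)) * η (ω - h) - 2 * (g (kCl m ω) * η ω)‖
      ≤ 26 * L ^ 3 * M ^ 2 * h ^ (5 / 4 : ℝ) * |ω ^ 2 - m ^ 2| ^ (-(3 / 4) : ℝ) := by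
  have hp : |ω + h| ≤ L := by
    have := abs_add_le ω h; rw [abs_of_pos hh] at this; linarith
  have hn : |ω - h| ≤ L := by
    have := abs_sub ω h; rw [abs_of_pos hh] at this; linarith
  have hω' : |ω| ≤ L := by linarith
  have hL0 : 0 ≤ L := by linarith
  have hM0 : 0 ≤ M := (norm_nonneg _).trans (hη0 0)
  set u := Real.sqrt h with hu_def
  have hu0 : 0 ≤ u := Real.sqrt_nonneg h
  have hu : u ^ 2 = h := Real.sq_sqrt hh.le
  have hu1 : u ≤ 1 := Real.sqrt_le_iff.2 ⟨one_pos.le, by simpa using hh1⟩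
  obtain ⟨hDp, hDp'⟩ := norm_kCl_sub_le hm hL hω' hp hu0 (by rwa [hu])
    (by rw [hu, add_sub_cancel_left, abs_of_pos hh])
  obtain ⟨hDn, hDn'⟩ := norm_kCl_sub_le hm hL hω' hn hu0 (by rwa [hu])
    (by rw [hu, sub_sub_cancel_left, abs_neg, abs_of_pos hh])
  have hE' := norm_kCl_second_difference_mul_le hm hmL hL hh.le hhm hω
  have hE : ‖kCl m ↑(ω + h) + kCl m ↑(ω - h) - 2 * kCl m ω‖
      ≤ ‖kCl m ↑(ω + h) - kCl m ω‖ + ‖kCl m ↑(ω - h) - kCl m ω‖ := by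
    refine le_trans (le_of_eq ?_) (norm_add_le _ _)
    congr 1; ring
  have hk := norm_kCl_le hm hmL hω'
  have hkp := norm_kCl_le hm hmL hp
  have hkn := norm_kCl_le hm hmL hn
  have hg1 : ∀ z : ℂ, ‖z‖ ≤ L + 1 → ‖deriv g z‖ ≤ M := fun z hz =>
    norm_deriv_le_on_closedBall hg (fun w hw => hgM w (by linarith)) hz
  have hgd : Differentiable ℂ (deriv g) :=
    (hg.contDiff (n := 2)).differentiable_deriv_two
  have hg2 : ∀ z : ℂ, ‖z‖ ≤ L → ‖deriv (deriv g) z‖ ≤ M := fun z hz =>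
    norm_deriv_le_on_closedBall hgd hg1 hz
  have hball : ∀ z : ℂ, ‖z‖ ≤ L ↔ z ∈ Metric.closedBall (0 : ℂ) L := fun z => by simp
  have hGG := norm_second_difference_le (convex_closedBall (0 : ℂ) L) hg hgd
    (fun z hz => hg2 z ((hball z).2 hz)) ((hball _).1 hkp) ((hball _).1 hkn) ((hball _).1 hk)
    (hg1 _ (by linarith))
  have hlip : ∀ z : ℂ, ‖z‖ ≤ L → ‖g z - g (kCl m ω)‖ ≤ M * ‖z - kCl m ω‖ := fun z hz =>
    (convex_closedBall (0 : ℂ) L).norm_image_sub_le_of_norm_deriv_le (fun z _ => hg z)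
      (fun z hz => hg1 z (((hball z).2 hz).trans (by linarith))) ((hball _).1 hk) ((hball _).1 hz)
  have hηη := norm_second_difference_le (convex_univ (𝕜 := ℝ) (E := ℝ)) hη hη'
    (fun z _ => hη2 z) (Set.mem_univ (ω + h)) (Set.mem_univ (ω - h)) (Set.mem_univ ω) (hη1 ω)
  have hηlip : ∀ x, ‖η x - η ω‖ ≤ M * ‖x - ω‖ := fun x =>
    convex_univ.norm_image_sub_le_of_norm_deriv_le (fun z _ => hη z) (fun z _ => hη1 z)
      (Set.mem_univ _) (Set.mem_univ _)
  have hηp := hηlip (ω + h)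
  have hηn := hηlip (ω - h)
  have hz : ω + h + (ω - h) - 2 * ω = 0 := by ring
  rw [hz, norm_zero, zero_add] at hηη
  rw [add_sub_cancel_left, sub_sub_cancel_left, norm_neg, Real.norm_of_nonneg hh.le] at hηη
  rw [add_sub_cancel_left, Real.norm_of_nonneg hh.le] at hηp
  rw [sub_sub_cancel_left, norm_neg, Real.norm_of_nonneg hh.le] at hηn
  have hGp := hlip _ hkp
  have hGn := hlip _ hkn
  have hgk := hgM (kCl m ω) (by linarith)
  have hq : 0 < ‖kCl m ω‖ := norm_pos_iff.2 hne
  have hqsq := norm_kCl_ofReal_sq hm ω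
  set E := ‖kCl m ↑(ω + h) + kCl m ↑(ω - h) - 2 * kCl m ω‖
  set P := ‖kCl m ↑(ω + h) - kCl m ω‖
  set N := ‖kCl m ↑(ω - h) - kCl m ω‖
  set q := ‖kCl m ω‖
  have hE0 : 0 ≤ E := norm_nonneg _
  have hP0 : 0 ≤ P := norm_nonneg _
  have hN0 : 0 ≤ N := norm_nonneg _
  have hT : ‖g (kCl m ↑(ω + h)) * η (ω + h) + g (kCl m ↑(ω - h)) * η (ω - h)
      - 2 * (g (kCl m ω) * η ω)‖
      ≤ M ^ 2 * (E + P ^ 2 + N ^ 2 + 2 * h ^ 2 + h * P + h * N) := by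
    have hsplit : g (kCl m ↑(ω + h)) * η (ω + h) + g (kCl m ↑(ω - h)) * η (ω - h)
          - 2 * (g (kCl m ω) * η ω)
        = (g (kCl m ↑(ω + h)) + g (kCl m ↑(ω - h)) - 2 * g (kCl m ω)) * η ω
          + g (kCl m ω) * (η (ω + h) + η (ω - h) - 2 * η ω)
          + (g (kCl m ↑(ω + h)) - g (kCl m ω)) * (η (ω + h) - η ω)
          + (g (kCl m ↑(ω - h)) - g (kCl m ω)) * (η (ω - h) - η ω) := by ring
    rw [hsplit]
    refine (norm_add_le _ _).trans ((add_le_add_left norm_add₃_le _).trans ?_)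
    simp only [norm_mul]
    calc _ ≤ M * (E + P ^ 2 + N ^ 2) * M + M * (M * (h ^ 2 + h ^ 2)) + M * P * (M * h)
          + M * N * (M * h) := by
          gcongr
          exact hη0 ω
      _ = _ := by ring
  set T := E + P ^ 2 + N ^ 2 + 2 * h ^ 2 + h * P + h * N with hTdef
  have hT0 : 0 ≤ T := by positivity
  have hT1 : T ≤ 26 * L ^ 3 * u := by
    have hE1 : E ≤ 4 * (L ^ 3 * u) := by
      have : L * u ≤ L ^ 3 * u := by gcongr; exact le_self_pow₀ hL (by norm_num)
      linarith
    have hsq : ∀ D, 0 ≤ D → D ≤ 2 * L * u → D ^ 2 ≤ 4 * (L ^ 3 * u) := fun D hD0 hD =>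
      calc D ^ 2 ≤ (2 * L * u) ^ 2 := by gcongr
        _ = 4 * (L ^ 2 * u ^ 2) := by ring
        _ ≤ 4 * (L ^ 3 * u) := by
          gcongr
          · norm_num
          · exact pow_le_of_le_one hu0 hu1 (by norm_num)
    have hhD : ∀ D, 0 ≤ D → D ≤ 2 * L * u → h * D ≤ 2 * (L ^ 3 * u) := fun D hD0 hD =>
      calc h * D ≤ 1 * (2 * L * u) := by gcongr
        _ = 2 * (L * u) := by ring
        _ ≤ 2 * (L ^ 3 * u) := by gcongr; exact le_self_pow₀ hL (by norm_num)
    have hh2 : h ^ 2 ≤ L ^ 3 * u := by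
      rw [← hu, ← pow_mul, ← one_mul (u ^ (2 * 2))]
      gcongr
      · exact one_le_pow₀ hL
      · exact pow_le_of_le_one hu0 hu1 (by norm_num)
    linarith [hsq P hP0 hDp, hsq N hN0 hDn, hhD P hP0 hDp, hhD N hN0 hDn]
  have hT2 : T * q ^ 3 ≤ 26 * L ^ 3 * h ^ 2 := by
    rw [hu] at hDp' hDn'
    have hE2 : E * q ^ 3 ≤ 12 * (L ^ 3 * h ^ 2) := by
      have : L ^ 2 * h ^ 2 ≤ L ^ 3 * h ^ 2 := by gcongr; norm_num
      linarith
    have hsq : ∀ D, 0 ≤ D → D * q ≤ 2 * L * h → D ^ 2 * q ^ 3 ≤ 4 * (L ^ 3 * h ^ 2) :=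
      fun D hD0 hD =>
      calc D ^ 2 * q ^ 3 = (D * q) ^ 2 * q := by ring
        _ ≤ (2 * L * h) ^ 2 * L := by gcongr
        _ = 4 * (L ^ 3 * h ^ 2) := by ring
    have hhD : ∀ D, 0 ≤ D → D * q ≤ 2 * L * h → h * D * q ^ 3 ≤ 2 * (L ^ 3 * h ^ 2) :=
      fun D hD0 hD =>
      calc h * D * q ^ 3 = h * (D * q) * q ^ 2 := by ring
        _ ≤ h * (2 * L * h) * L ^ 2 := by gcongr
        _ = 2 * (L ^ 3 * h ^ 2) := by ring
    have hh2 : h ^ 2 * q ^ 3 ≤ L ^ 3 * h ^ 2 := by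
      rw [mul_comm]; gcongr
    have : T * q ^ 3 = E * q ^ 3 + P ^ 2 * q ^ 3 + N ^ 2 * q ^ 3 + 2 * (h ^ 2 * q ^ 3)
      + h * P * q ^ 3 + h * N * q ^ 3 := by rw [hTdef]; ring
    linarith [hsq P hP0 hDp', hsq N hN0 hDn', hhD P hP0 hDp', hhD N hN0 hDn']
  calc _ ≤ M ^ 2 * T := hT
    _ ≤ M ^ 2 * (26 * L ^ 3 * h ^ (5 / 4 : ℝ) * |ω ^ 2 - m ^ 2| ^ (-(3 / 4) : ℝ)) := by
      gcongr
      exact le_mul_rpow_of_le_sqrt_of_mul_le hT0 hh hq hqsq hT1 hT2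
    _ = _ := by ring

theorem integrable_comp_kCl_mul {m : ℝ} (hm : 0 < m) {L N : ℝ} {g : ℂ → ℂ}
    (hg : Continuous g) (hgN : ∀ z : ℂ, ‖z‖ ≤ L → ‖g z‖ ≤ N) (hmL : m ≤ L)
    {η : ℝ → ℂ} (hη : Continuous η) (hsupp : HasCompactSupport η)
    (hηL : ∀ x, η x ≠ 0 → |x| ≤ L) :
    Integrable (fun ω : ℝ => g (kCl m ω) * η ω) ∧
      ∫ ω : ℝ, ‖g (kCl m ω) * η ω‖ ≤ N * ∫ ω, ‖η ω‖ := by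
  have hηi : Integrable η := hη.integrable_of_hasCompactSupport hsupp
  have hle : ∀ ω : ℝ, ‖g (kCl m ω) * η ω‖ ≤ N * ‖η ω‖ := fun ω => by
    rw [norm_mul]
    by_cases h : η ω = 0
    · simp [h]
    · gcongr
      exact hgN _ (norm_kCl_le hm hmL (hηL ω h))
  have hint : Integrable (fun ω : ℝ => g (kCl m ω) * η ω) :=
    (hηi.norm.const_mul N).mono'
      ((hg.measurable.comp (measurable_kCl_ofReal hm)).mul hη.measurable).aestronglyMeasurable
      (.of_forall hle)
  refine ⟨hint, ?_⟩
  rw [← integral_const_mul]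
  exact integral_mono hint.norm (hηi.norm.const_mul N) hle

theorem exists_norm_integral_comp_kCl_mul_exp_le {m : ℝ} (hm : 0 < m) {η : ℝ → ℂ}
    (hη : ContDiff ℝ 2 η) (hsupp : HasCompactSupport η) :
    ∃ r : ℝ, ∀ N : ℝ, ∃ C : ℝ, ∀ g : ℂ → ℂ, Differentiable ℂ g →
      (∀ z : ℂ, ‖z‖ ≤ r → ‖g z‖ ≤ N) → Integrable (fun ω : ℝ => g (kCl m ω) * η ω) ∧ ∀ t : ℝ,
        ‖∫ ω : ℝ, g (kCl m ω) * η ω * Complex.exp (-Complex.I * (ω : ℂ) * (t : ℂ))‖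
          ≤ C * (1 + ‖t‖) ^ (-(5 / 4) : ℝ) := by
  have hηd : Differentiable ℝ η := hη.differentiable (by norm_num)
  have hη'd : Differentiable ℝ (deriv η) := hη.differentiable_deriv_two
  have hη''c : Continuous (deriv (deriv η)) := by
    have h1 : ContDiff ℝ 1 (deriv η) := ContDiff.deriv' hη
    exact h1.continuous_deriv le_rfl
  obtain ⟨M₀, hM₀⟩ := hηd.continuous.bounded_above_of_compact_support hsupp
  obtain ⟨M₁, hM₁⟩ := hη'd.continuous.bounded_above_of_compact_support hsupp.deriv
  obtain ⟨M₂, hM₂⟩ := hη''c.bounded_above_of_compact_support hsupp.deriv.deriv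
  obtain ⟨B, hB⟩ := hsupp.isCompact.isBounded.exists_norm_le
  have hηB : ∀ x, η x ≠ 0 → |x| ≤ B := fun x hx => hB x (subset_tsupport η hx)
  set L := max (max 1 m) (B + 2) with hLdef
  have hL : 1 ≤ L := (le_max_left _ _).trans (le_max_left _ _)
  have hmL : m ≤ L := (le_max_right _ _).trans (le_max_left _ _)
  have hBL : B + 2 ≤ L := le_max_right _ _
  refine ⟨L + 2, fun N => ?_⟩
  set M := max (max N M₀) (max M₁ M₂)
  have hNM : N ≤ M := (le_max_left _ _).trans (le_max_left _ _)
  have hM₀M : M₀ ≤ M := (le_max_right _ _).trans (le_max_left _ _)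
  have hM₁M : M₁ ≤ M := (le_max_left _ _).trans (le_max_right _ _)
  have hM₂M : M₂ ≤ M := (le_max_right _ _).trans (le_max_right _ _)
  set h₀ := min 1 m
  have hh₀ : 0 < h₀ := lt_min one_pos hm
  set W : ℝ → ℝ := (Set.Icc (-L) L).indicator fun x => |x ^ 2 - m ^ 2| ^ (-(3 / 4) : ℝ)
  have hW : Integrable W :=
    (integrable_indicator_iff measurableSet_Icc).2 (integrableOn_abs_sq_sub_sq_rpow hm _ _)
  have hW0 : ∀ x, 0 ≤ W x := fun x => Set.indicator_nonneg (fun _ _ => by positivity) x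
  set J := N * ∫ ω, ‖η ω‖
  set K := 26 * L ^ 3 * M ^ 2
  have hK : 0 ≤ K := by positivity
  refine ⟨(K * (∫ ω, W ω) + J * h₀ ^ (-(5 / 4) : ℝ)) * (Real.pi + h₀) ^ (5 / 4 : ℝ),
    fun g hg hgN => ?_⟩
  obtain ⟨hint, hJ⟩ := integrable_comp_kCl_mul hm hg.continuous
    (fun z hz => hgN z (hz.trans (by linarith))) hmL hηd.continuous hsupp
    (fun x hx => (hηB x hx).trans (by linarith))
  refine ⟨hint, fun t => ?_⟩
  set e : ℝ → ℂ := fun ω => Complex.exp (-Complex.I * (ω : ℂ) * (t : ℂ))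
  have he1 : ∀ ω, ‖e ω‖ = 1 := fun ω => by
    rw [Complex.norm_exp]; simp
  have hec : Continuous e := by fun_prop
  have hJ0 : 0 ≤ J := (integral_nonneg fun _ => norm_nonneg _).trans hJ
  have hWi : 0 ≤ ∫ ω, W ω := integral_nonneg hW0
  have ht1 : 0 < 1 + ‖t‖ := by positivity
  set Z := (Real.pi + h₀) / (1 + ‖t‖) with hZdef
  have hZ : Z ^ (5 / 4 : ℝ) = (Real.pi + h₀) ^ (5 / 4 : ℝ) * (1 + ‖t‖) ^ (-(5 / 4) : ℝ) := by
    rw [Real.div_rpow (by positivity) ht1.le, Real.rpow_neg ht1.le, div_eq_mul_inv]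
  rw [mul_assoc, ← hZ]
  rcases le_or_gt (Real.pi / h₀) |t| with ht | ht
  · have ht0 : 0 < |t| := lt_of_lt_of_le (by positivity) ht
    set h := Real.pi / |t| with hhdef
    have hh : 0 < h := by positivity
    have hhh₀ : h ≤ h₀ := by
      rw [hhdef, div_le_iff₀ ht0]; rwa [div_le_iff₀ hh₀, mul_comm] at ht
    have hh1 : h ≤ 1 := hhh₀.trans (min_le_left _ _)
    have hhm : h ≤ m := hhh₀.trans (min_le_right _ _)
    have hhZ : h ≤ Z := by
      rw [hZdef, le_div_iff₀ ht1, Real.norm_eq_abs, mul_add, hhdef, div_mul_cancel₀ _ ht0.ne',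
        ← hhdef]
      linarith
    have hae : ∀ᵐ ω : ℝ, kCl m ω ≠ 0 := by
      have hfin : ({m, -m} : Set ℝ).Finite := by simp
      filter_upwards [hfin.countable.ae_notMem volume] with ω hω h0
      have := kCl_ofReal_sq hm ω
      rw [h0, zero_pow two_ne_zero, eq_comm, sub_eq_zero] at this
      exact hω (sq_eq_sq_iff_eq_or_eq_neg.1 (by exact_mod_cast this))
    have key := norm_integral_mul_le_of_antiperiodic hint hec (fun ω => (he1 ω).le)
      (antiperiodic_exp_neg_I_mul (abs_pos.1 ht0)) (hW.const_mul (K * h ^ (5 / 4 : ℝ))) (by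
        filter_upwards [hae] with ω hω
        by_cases hωL : |ω| + h ≤ L
        · have hmem : ω ∈ Set.Icc (-L) L := abs_le.1 (by linarith)
          simp only [W, Set.indicator_of_mem hmem]
          exact norm_second_difference_comp_kCl_mul_le hm hmL hL hh hh1 (by linarith) hωL hg
            (fun z hz => (hgN z hz).trans hNM) hηd hη'd (fun x => (hM₀ x).trans hM₀M)
            (fun x => (hM₁ x).trans hM₁M) (fun x => (hM₂ x).trans hM₂M) hω
        · have hz : ∀ x, |ω| ≤ |x| + h → η x = 0 := fun x hx => by
            by_contra hne
            linarith [hηB x hne]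
          have hz0 := hz ω (by linarith)
          have hzp := hz (ω + h) (by
            have := abs_sub (ω + h) h; rw [add_sub_cancel_right, abs_of_pos hh] at this
            exact this)
          have hzn := hz (ω - h) (by
            have := abs_add_le (ω - h) h; rw [sub_add_cancel, abs_of_pos hh] at this
            exact this)
          rw [hz0, hzp, hzn]
          simp only [mul_zero, add_zero, sub_zero, norm_zero]
          exact mul_nonneg (by positivity) (hW0 ω))
    rw [integral_const_mul] at key
    calc ‖∫ ω : ℝ, g (kCl m ω) * η ω * e ω‖
        ≤ 4 * ‖∫ ω : ℝ, g (kCl m ω) * η ω * e ω‖ := by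
          linarith [norm_nonneg (∫ ω : ℝ, g (kCl m ω) * η ω * e ω)]
      _ ≤ K * h ^ (5 / 4 : ℝ) * ∫ ω, W ω := key
      _ = (K * (∫ ω, W ω) + 0) * h ^ (5 / 4 : ℝ) := by ring
      _ ≤ (K * (∫ ω, W ω) + J * h₀ ^ (-(5 / 4) : ℝ)) * Z ^ (5 / 4 : ℝ) := by
          gcongr
          positivity
  · have hh₀Z : h₀ ≤ Z := by
      rw [hZdef, le_div_iff₀ ht1, Real.norm_eq_abs]
      rw [lt_div_iff₀ hh₀] at ht
      linarith
    calc ‖∫ ω : ℝ, g (kCl m ω) * η ω * e ω‖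
        ≤ ∫ ω : ℝ, ‖g (kCl m ω) * η ω‖ := by
          refine norm_integral_le_of_norm_le hint.norm (.of_forall fun ω => ?_)
          rw [norm_mul, he1, mul_one]
      _ ≤ J := hJ
      _ = (0 + J * h₀ ^ (-(5 / 4) : ℝ)) * h₀ ^ (5 / 4 : ℝ) := by
          rw [zero_add, mul_assoc, ← Real.rpow_add hh₀]; simp
      _ ≤ (K * (∫ ω, W ω) + J * h₀ ^ (-(5 / 4) : ℝ)) * Z ^ (5 / 4 : ℝ) := by
          gcongr
          positivity

/-- the kernels
`Ň_x(t) = (1/2π)∫ (ik(ω) sgn x)^j e^{ik(ω)|x|} (−iω)^κ̃ ζ(ω) e^{−iωt} dω`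
are in `L¹(ℝ)`, with `L¹`-norms bounded uniformly in `|x| ≤ R`. -/
theorem multiplicator_kernels_uniform_L1
    (m : ℝ) (hm : 0 < m)
    (ζ : ℝ → ℂ) (hζ : ContDiff ℝ (⊤ : ℕ∞) ζ) (hζsupp : HasCompactSupport ζ)
    (j κt : ℕ)
    (Nch : ℝ → ℝ → ℂ)
    (hNch : ∀ x t : ℝ, Nch x t = ((1 / (2 * Real.pi) : ℝ) : ℂ)
      * ∫ ω : ℝ, (Complex.I * kCl m (ω:ℂ) * ((Real.sign x : ℝ) : ℂ))^j
          * Complex.exp (Complex.I * kCl m (ω:ℂ) * ((|x| : ℝ) : ℂ))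
          * (-Complex.I * (ω:ℂ))^κt * ζ ω
          * Complex.exp (-Complex.I * (ω:ℂ) * (t:ℂ))) :
    (∀ x : ℝ, Integrable (fun t => Nch x t) (volume : Measure ℝ)) ∧
    (∀ R : ℝ, 0 < R → ∃ C : ℝ, ∀ x : ℝ, |x| ≤ R →
      ∫ t : ℝ, ‖Nch x t‖ ≤ C) := by
  have hηsmooth : ContDiff ℝ 2 fun ω : ℝ => (-Complex.I * (ω : ℂ)) ^ κt * ζ ω :=
    ((contDiff_const.mul Complex.ofRealCLM.contDiff).pow κt).mul
      (contDiff_infty.1 hζ 2)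
  have hηsupp : HasCompactSupport fun ω : ℝ => (-Complex.I * (ω : ℂ)) ^ κt * ζ ω :=
    hζsupp.mul_left
  obtain ⟨r, hr⟩ := exists_norm_integral_comp_kCl_mul_exp_le hm hηsmooth hηsupp
  have hdecay : ∀ R : ℝ, ∃ C : ℝ, ∀ x : ℝ, |x| ≤ R → Measurable (Nch x) ∧
      ∀ t : ℝ, ‖Nch x t‖ ≤ C * (1 + ‖t‖) ^ (-(5 / 4) : ℝ) := by
    intro R
    obtain ⟨C, hC⟩ := hr (r ^ j * Real.exp (r * R))
    refine ⟨1 / (2 * Real.pi) * C, fun x hx => ?_⟩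
    have hs : ‖((Real.sign x : ℝ) : ℂ)‖ ≤ 1 := by
      rcases Real.sign_apply_eq x with h | h | h <;> simp [h]
    set g : ℂ → ℂ := fun z => (Complex.I * z * ((Real.sign x : ℝ) : ℂ)) ^ j
      * Complex.exp (Complex.I * z * ((|x| : ℝ) : ℂ)) with hgdef
    have hg : Differentiable ℂ g := by fun_prop
    obtain ⟨hint, hbound⟩ := hC g hg (fun z hz => by
      have hr0 : 0 ≤ r := (norm_nonneg z).trans hz
      rw [hgdef]
      simp only [norm_mul, norm_pow, Complex.norm_I, one_mul]
      gcongr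
      · exact (mul_le_of_le_one_right (norm_nonneg z) hs).trans hz
      · refine (Complex.norm_exp_le_exp_norm _).trans (Real.exp_le_exp.2 ?_)
        simp only [norm_mul, Complex.norm_I, one_mul, Complex.norm_real, Real.norm_eq_abs, abs_abs]
        gcongr)
    have hN : Nch x = fun t : ℝ => ((1 / (2 * Real.pi) : ℝ) : ℂ)
        * ∫ ω : ℝ, g (kCl m ω) * ((-Complex.I * (ω : ℂ)) ^ κt * ζ ω)
          * Complex.exp (-Complex.I * (ω : ℂ) * (t : ℂ)) := by
      ext t
      rw [hNch]
      congr 2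
      ext ω
      rw [hgdef]
      ring
    constructor
    · rw [hN]
      refine Continuous.measurable (continuous_const.mul ?_)
      refine continuous_of_dominated (fun t => ?_) (fun t => .of_forall fun ω => ?_) hint.norm
        (.of_forall fun ω => by fun_prop)
      · exact hint.aestronglyMeasurable.mul (Continuous.aestronglyMeasurable (by fun_prop))
      · rw [norm_mul, Complex.norm_exp]
        simp
    · intro t
      rw [hN]
      beta_reduce
      rw [norm_mul, Complex.norm_real, Real.norm_of_nonneg (by positivity), mul_assoc]
      gcongr
      exact hbound t
  have hdom : Integrable fun t : ℝ => (1 + ‖t‖) ^ (-(5 / 4) : ℝ) :=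
    integrable_one_add_norm (by norm_num)
  have hNint : ∀ x, Integrable (Nch x) := fun x => by
    obtain ⟨C, hC⟩ := hdecay |x|
    obtain ⟨hmeas, hle⟩ := hC x le_rfl
    exact (hdom.const_mul C).mono' hmeas.aestronglyMeasurable (.of_forall hle)
  refine ⟨hNint, fun R _ => ?_⟩
  obtain ⟨C, hC⟩ := hdecay R
  exact ⟨∫ t : ℝ, C * (1 + ‖t‖) ^ (-(5 / 4) : ℝ), fun x hx =>
    integral_mono (hNint x).norm (hdom.const_mul C) (hC x hx).2⟩
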